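/- (First unicity lemma for Needham–Schroeder–Lowe.) If evs ∈ nsl, Crypt (pubK B) ⟨Nonce NA, Agent A⟩ ∈ parts (spies evs), Crypt (pubK B') ⟨Nonce NA, Agent A'⟩ ∈ parts (spies evs) and Nonce NA ∉ analz (spies evs), then A = A' and B = B'. -/

import Mathlib

inductive agent : Type
  | Server : agent
  | Friend : ℕ → agent
  | Spy : agent
deriving DecidableEq

inductive msg : Type
  | Agent : agent → msg
  | Number : ℕ → msg
  | Nonce : ℕ → msg
  | Key : ℕ → msg
  | Hash : msg → msg
  | MPair : msg → msg → msg
  | Crypt : ℕ → msg → msg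
deriving DecidableEq

inductive partsP (H : Set msg) : msg → Prop
  | Inj : ∀ X, X ∈ H → partsP H X
  | Fst : ∀ X Y, partsP H (msg.MPair X Y) → partsP H X
  | Snd : ∀ X Y, partsP H (msg.MPair X Y) → partsP H Y
  | Body : ∀ K X, partsP H (msg.Crypt K X) → partsP H X

/-- `parts H`: sub-components of messages of `H`. -/
def parts (H : Set msg) : Set msg := {X | partsP H X}

inductive analzP (invKey : ℕ → ℕ) (H : Set msg) : msg → Prop
  | Inj : ∀ X, X ∈ H → analzP invKey H X
  | Fst : ∀ X Y, analzP invKey H (msg.MPair X Y) → analzP invKey H X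
  | Snd : ∀ X Y, analzP invKey H (msg.MPair X Y) → analzP invKey H Y
  | Decrypt : ∀ K X, analzP invKey H (msg.Crypt K X) →
      analzP invKey H (msg.Key (invKey K)) → analzP invKey H X

/-- `analz invKey H`: what can be obtained by decomposing and decrypting messages of `H`. -/
def analz (invKey : ℕ → ℕ) (H : Set msg) : Set msg := {X | analzP invKey H X}

inductive synthP (H : Set msg) : msg → Prop
  | Inj : ∀ X, X ∈ H → synthP H X
  | Ag : ∀ a, synthP H (msg.Agent a)
  | Num : ∀ n, synthP H (msg.Number n)
  | Hsh : ∀ X, synthP H X → synthP H (msg.Hash X)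
  | Pr : ∀ X Y, synthP H X → synthP H Y → synthP H (msg.MPair X Y)
  | Cry : ∀ K X, synthP H X → msg.Key K ∈ H → synthP H (msg.Crypt K X)

/-- `synth H`: messages that can be synthesized from `H`. -/
def synth (H : Set msg) : Set msg := {X | synthP H X}

inductive guardP (invKey : ℕ → ℕ) (n : ℕ) (Ks : Set ℕ) : msg → Prop
  | No_Nonce : ∀ X, msg.Nonce n ∉ parts {X} → guardP invKey n Ks X
  | Guard : ∀ K X, invKey K ∈ Ks → guardP invKey n Ks (msg.Crypt K X)
  | Cry : ∀ K X, guardP invKey n Ks X → guardP invKey n Ks (msg.Crypt K X)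
  | Pr : ∀ X Y, guardP invKey n Ks X → guardP invKey n Ks Y →
      guardP invKey n Ks (msg.MPair X Y)

/-- `guard n Ks`: messages in which `Nonce n` is guarded by the keys of `Ks`. -/
def guardMsg (invKey : ℕ → ℕ) (n : ℕ) (Ks : Set ℕ) : Set msg := {X | guardP invKey n Ks X}

/-- `Guard n Ks H`: every message of `H` lies in `guard n Ks`. -/
def Guard (invKey : ℕ → ℕ) (n : ℕ) (Ks : Set ℕ) (H : Set msg) : Prop :=
  ∀ X ∈ H, X ∈ guardMsg invKey n Ks
inductive event : Type
  | Says : agent → agent → msg → event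
deriving DecidableEq

def msgOf : event → msg
  | event.Says _ _ X => X

/-- Set of messages sent in a trace. -/
def sent (evs : List event) : Set msg :=
  {X | ∃ A B, event.Says A B X ∈ evs}
/-- Private key of an agent: the inverse of its public key. -/
def priK (invKey : ℕ → ℕ) (pubK : agent → ℕ) (A : agent) : ℕ := invKey (pubK A)

/-- Initial knowledge of each agent in a public-key infrastructure:
every agent knows its own private key and all public keys; the spy moreover
knows the private keys of the bad agents. -/
def initStatePK (invKey : ℕ → ℕ) (pubK : agent → ℕ) (bad : Set agent) : agent → Set msg :=
  fun A =>
    match A with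
    | agent.Spy =>
        {X | ∃ B ∈ bad, X = msg.Key (priK invKey pubK B)} ∪ {X | ∃ B, X = msg.Key (pubK B)}
    | _ => {msg.Key (priK invKey pubK A)} ∪ {X | ∃ B, X = msg.Key (pubK B)}

/-- `spies evs`: the private keys of the bad agents, all public keys, and
every message sent in `evs`. -/
def spiesPK (invKey : ℕ → ℕ) (pubK : agent → ℕ) (bad : Set agent) (evs : List event) :
    Set msg :=
  initStatePK invKey pubK bad agent.Spy ∪ sent evs

/-- `used evs`: parts of all agents' initial knowledge and of all messages sent in `evs`. -/
def usedPK (invKey : ℕ → ℕ) (pubK : agent → ℕ) (bad : Set agent) (evs : List event) :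
    Set msg :=
  parts ((⋃ A, initStatePK invKey pubK bad A) ∪ sent evs)
/-- The Needham–Schroeder–Lowe protocol. -/
inductive nsl (invKey : ℕ → ℕ) (pubK : agent → ℕ) (bad : Set agent) : List event → Prop
  | Nil : nsl invKey pubK bad []
  | Fake : ∀ evs B X, nsl invKey pubK bad evs →
      X ∈ synth (analz invKey (spiesPK invKey pubK bad evs)) →
      nsl invKey pubK bad (event.Says agent.Spy B X :: evs)
  | NS1 : ∀ evs A B NA, nsl invKey pubK bad evs →
      msg.Nonce NA ∉ usedPK invKey pubK bad evs →
      nsl invKey pubK bad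
        (event.Says A B (msg.Crypt (pubK B) (msg.MPair (msg.Nonce NA) (msg.Agent A))) :: evs)
  | NS2 : ∀ evs A A' B NA NB, nsl invKey pubK bad evs →
      msg.Nonce NB ∉ usedPK invKey pubK bad evs →
      event.Says A' B (msg.Crypt (pubK B) (msg.MPair (msg.Nonce NA) (msg.Agent A))) ∈ evs →
      nsl invKey pubK bad
        (event.Says B A (msg.Crypt (pubK A)
          (msg.MPair (msg.Nonce NA) (msg.MPair (msg.Nonce NB) (msg.Agent B)))) :: evs)
  | NS3 : ∀ evs A B B' NA NB, nsl invKey pubK bad evs →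
      event.Says A B (msg.Crypt (pubK B) (msg.MPair (msg.Nonce NA) (msg.Agent A))) ∈ evs →
      event.Says B' A (msg.Crypt (pubK A)
        (msg.MPair (msg.Nonce NA) (msg.MPair (msg.Nonce NB) (msg.Agent B)))) ∈ evs →
      nsl invKey pubK bad (event.Says A B (msg.Crypt (pubK B) (msg.Nonce NB)) :: evs)

def subM : msg → msg → Prop
  | msg.MPair X Y, Z => Z = msg.MPair X Y ∨ subM X Z ∨ subM Y Z
  | msg.Crypt K X, Z => Z = msg.Crypt K X ∨ subM X Z
  | X, Z => Z = X

theorem subM_refl (X : msg) : subM X X := by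
  cases X <;> simp [subM]

theorem subM_closed (X : msg) :
    (∀ Y Z, subM X (msg.MPair Y Z) → subM X Y ∧ subM X Z) ∧
    (∀ K Y, subM X (msg.Crypt K Y) → subM X Y) := by
  induction X with
  | MPair P Q ihP ihQ =>
    constructor
    · intro Y Z h
      simp only [subM, msg.MPair.injEq] at h ⊢
      rcases h with ⟨rfl, rfl⟩ | h | h
      · simp [subM_refl]
      · have := ihP.1 _ _ h; tauto
      · have := ihQ.1 _ _ h; tauto
    · intro K Y h
      simp only [subM, reduceCtorEq, false_or] at h ⊢
      rcases h with h | h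
      · have := ihP.2 _ _ h; tauto
      · have := ihQ.2 _ _ h; tauto
  | Crypt K' P ih =>
    constructor
    · intro Y Z h
      simp only [subM, reduceCtorEq, false_or] at h ⊢
      have := ih.1 _ _ h; tauto
    · intro K Y h
      simp only [subM, msg.Crypt.injEq] at h ⊢
      rcases h with ⟨rfl, rfl⟩ | h
      · simp [subM_refl]
      · have := ih.2 _ _ h; tauto
  | _ => simp [subM]

theorem parts_insert_sub {H : Set msg} {X Y : msg} (h : Y ∈ parts (insert X H)) :
    subM X Y ∨ Y ∈ parts H := by
  induction h with
  | Inj Y h =>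
    rcases h with rfl | h
    · exact Or.inl (subM_refl _)
    · exact Or.inr (partsP.Inj _ h)
  | Fst P Q _ ih =>
    rcases ih with h | h
    · exact Or.inl ((subM_closed X).1 _ _ h).1
    · exact Or.inr (partsP.Fst _ _ h)
  | Snd P Q _ ih =>
    rcases ih with h | h
    · exact Or.inl ((subM_closed X).1 _ _ h).2
    · exact Or.inr (partsP.Snd _ _ h)
  | Body K P _ ih =>
    rcases ih with h | h
    · exact Or.inl ((subM_closed X).2 _ _ h)
    · exact Or.inr (partsP.Body _ _ h)

theorem parts_mono' {H G : Set msg} (hs : H ⊆ G) : parts H ⊆ parts G := by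
  intro Y h
  induction h with
  | Inj Y h => exact partsP.Inj _ (hs h)
  | Fst P Q _ ih => exact partsP.Fst _ _ ih
  | Snd P Q _ ih => exact partsP.Snd _ _ ih
  | Body K P _ ih => exact partsP.Body _ _ ih

theorem analz_mono' {f : ℕ → ℕ} {H G : Set msg} (hs : H ⊆ G) : analz f H ⊆ analz f G := by
  intro Y h
  induction h with
  | Inj Y h => exact analzP.Inj _ (hs h)
  | Fst P Q _ ih => exact analzP.Fst _ _ ih
  | Snd P Q _ ih => exact analzP.Snd _ _ ih
  | Decrypt K P _ _ ih ih2 => exact analzP.Decrypt _ _ ih ih2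

theorem analz_parts {f : ℕ → ℕ} {H : Set msg} : analz f H ⊆ parts H := by
  intro Y h
  induction h with
  | Inj Y h => exact partsP.Inj _ h
  | Fst P Q _ ih => exact partsP.Fst _ _ ih
  | Snd P Q _ ih => exact partsP.Snd _ _ ih
  | Decrypt K P _ _ ih ih2 => exact partsP.Body _ _ ih

theorem parts_fake {f : ℕ → ℕ} {H : Set msg} {X Y : msg} (hX : X ∈ synth (analz f H))
    (h : Y ∈ parts (insert X H)) : Y ∈ synth (analz f H) ∨ Y ∈ parts H := by
  induction h with
  | Inj Y h =>
    rcases h with rfl | h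
    · exact Or.inl hX
    · exact Or.inr (partsP.Inj _ h)
  | Fst P Q _ ih =>
    rcases ih with h | h
    · cases h with
      | Inj _ h => exact Or.inr (partsP.Fst _ _ (analz_parts h))
      | Pr _ _ h1 h2 => exact Or.inl h1
    · exact Or.inr (partsP.Fst _ _ h)
  | Snd P Q _ ih =>
    rcases ih with h | h
    · cases h with
      | Inj _ h => exact Or.inr (partsP.Snd _ _ (analz_parts h))
      | Pr _ _ h1 h2 => exact Or.inl h2
    · exact Or.inr (partsP.Snd _ _ h)
  | Body K P _ ih =>
    rcases ih with h | h
    · cases h with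
      | Inj _ h => exact Or.inr (partsP.Body _ _ (analz_parts h))
      | Cry _ _ h1 h2 => exact Or.inl h1
    · exact Or.inr (partsP.Body _ _ h)

theorem fake_crypt {f : ℕ → ℕ} {H : Set msg} {X Z : msg} {K n : ℕ}
    (hX : X ∈ synth (analz f H)) (hn : msg.Nonce n ∉ analz f H)
    (h : msg.Crypt K (msg.MPair (msg.Nonce n) Z) ∈ parts (insert X H)) :
    msg.Crypt K (msg.MPair (msg.Nonce n) Z) ∈ parts H := by
  rcases parts_fake hX h with h | h
  · cases h with
    | Inj _ h => exact analz_parts h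
    | Cry _ _ h _ =>
      cases h with
      | Inj _ h => exact absurd (analzP.Fst _ _ h) hn
      | Pr _ _ h _ =>
        cases h with
        | Inj _ h => exact absurd h hn
  · exact h

theorem spies_cons (f : ℕ → ℕ) (p : agent → ℕ) (bad : Set agent) (A B : agent) (X : msg)
    (evs : List event) :
    spiesPK f p bad (event.Says A B X :: evs) = insert X (spiesPK f p bad evs) := by
  ext Y
  simp only [spiesPK, sent, Set.mem_union, Set.mem_insert_iff, Set.mem_setOf_eq, List.mem_cons,
    event.Says.injEq]
  constructor
  · rintro (h | ⟨a, b, ⟨_, _, h⟩ | h⟩)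
    · exact Or.inr (Or.inl h)
    · exact Or.inl h
    · exact Or.inr (Or.inr ⟨a, b, h⟩)
  · rintro (h | h | ⟨a, b, h⟩)
    · exact Or.inr ⟨A, B, Or.inl ⟨rfl, rfl, h⟩⟩
    · exact Or.inl h
    · exact Or.inr ⟨a, b, Or.inr h⟩

theorem spies_used {f : ℕ → ℕ} {p : agent → ℕ} {bad : Set agent} {evs : List event}
    {K n : ℕ} {Z : msg}
    (h : msg.Crypt K (msg.MPair (msg.Nonce n) Z) ∈ parts (spiesPK f p bad evs)) :
    msg.Nonce n ∈ usedPK f p bad evs := by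
  refine parts_mono' ?_ (partsP.Fst _ _ (partsP.Body _ _ h))
  exact Set.union_subset_union_left _ (Set.subset_iUnion (initStatePK f p bad) agent.Spy)

/-- First unicity lemma for Needham–Schroeder–Lowe. -/
theorem nsl_unicity1
    (invKey : ℕ → ℕ) (pubK : agent → ℕ) (bad : Set agent)
    (hinv : ∀ K, invKey (invKey K) = K)
    (hpub : Function.Injective pubK)
    (hpri : Function.Injective (priK invKey pubK))
    (hpubpri : ∀ A B : agent, pubK A ≠ priK invKey pubK B)
    (hspy : agent.Spy ∈ bad)
    (evs : List event) (A A' B B' : agent) (NA : ℕ)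
    (hevs : nsl invKey pubK bad evs)
    (h1 : msg.Crypt (pubK B) (msg.MPair (msg.Nonce NA) (msg.Agent A))
      ∈ parts (spiesPK invKey pubK bad evs))
    (h2 : msg.Crypt (pubK B') (msg.MPair (msg.Nonce NA) (msg.Agent A'))
      ∈ parts (spiesPK invKey pubK bad evs))
    (h3 : msg.Nonce NA ∉ analz invKey (spiesPK invKey pubK bad evs)) :
    A = A' ∧ B = B' := by
  induction hevs with
  | Nil =>
    exfalso
    have key : ∀ Y, Y ∈ parts (spiesPK invKey pubK bad []) → ∃ k, Y = msg.Key k := by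
      intro Y h
      induction h with
      | Inj Y h =>
        rcases h with (⟨b, _, h⟩ | ⟨b, h⟩) | ⟨a, b, h⟩
        · exact ⟨_, h⟩
        · exact ⟨_, h⟩
        · simp at h
      | Fst P Q _ ih => simp at ih
      | Snd P Q _ ih => simp at ih
      | Body K P _ ih => simp at ih
    simpa using key _ h1
  | Fake evs b X _ hX ih =>
    rw [spies_cons] at h1 h2 h3
    have h3' := fun h => h3 (analz_mono' (Set.subset_insert _ _) h)
    exact ih (fake_crypt hX h3' h1) (fake_crypt hX h3' h2) h3'
  | NS1 evs a b n _ hn ih =>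
    rw [spies_cons] at h1 h2 h3
    have h3' := fun h => h3 (analz_mono' (Set.subset_insert _ _) h)
    have e1 := parts_insert_sub h1
    have e2 := parts_insert_sub h2
    simp only [subM, msg.Crypt.injEq, msg.MPair.injEq, msg.Nonce.injEq, msg.Agent.injEq,
      reduceCtorEq, or_false] at e1 e2
    rcases e1 with ⟨k1, rfl, rfl⟩ | e1
    · rcases e2 with ⟨k2, _, rfl⟩ | e2
      · exact ⟨rfl, hpub (k1.trans k2.symm)⟩
      · exact absurd (spies_used e2) hn
    · rcases e2 with ⟨k2, rfl, rfl⟩ | e2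
      · exact absurd (spies_used e1) hn
      · exact ih e1 e2 h3'
  | NS2 evs a a' b n m _ hn _ ih =>
    rw [spies_cons] at h1 h2 h3
    have h3' := fun h => h3 (analz_mono' (Set.subset_insert _ _) h)
    have e1 := parts_insert_sub h1
    have e2 := parts_insert_sub h2
    simp [subM] at e1 e2
    exact ih e1 e2 h3'
  | NS3 evs a b b' n m _ _ _ ih =>
    rw [spies_cons] at h1 h2 h3
    have h3' := fun h => h3 (analz_mono' (Set.subset_insert _ _) h)
    have e1 := parts_insert_sub h1
    have e2 := parts_insert_sub h2
    simp [subM] at e1 e2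
    exact ih e1 e2 h3'
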